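/- arXiv:2102.10609 — 7 statements merged into one kernel-verified Lean document; each statement's English description precedes it below -/
import Mathlib

section
/- Let n ≥ 1 and let v : {1,…,n} → ℝ² be a totally nonzero tuple. Then there exist a permutation σ of {1,…,n} and signs ε : {1,…,n} → {1,−1} such that for all i ≠ j, sgn(det(v_i | v_j)) = ε_i·ε_j·sgn(σ(j) − σ(i)). -/
/-- The determinant of the 2×2 matrix with columns `v` and `w`. -/
noncomputable def det2 (v w : ℝ × ℝ) : ℝ := v.1 * w.2 - v.2 * w.1

/-- A tuple `v : Fin n → ℝ²` is totally nonzero if `det (v i | v j) ≠ 0` for all `i ≠ j`. -/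
def TotallyNonzero (n : ℕ) (v : Fin n → ℝ × ℝ) : Prop :=
  ∀ i j : Fin n, i ≠ j → det2 (v i) (v j) ≠ 0

/-- The slope of a plane vector, with value `⊤` on the vertical axis. -/
noncomputable def slope2 (u : ℝ × ℝ) : WithTop ℝ :=
  if u.1 = 0 then ⊤ else ((u.2 / u.1 : ℝ) : WithTop ℝ)

/-- The sign by which to multiply `u` to move it to the closed right half-plane, and to the upper
half of the vertical axis if it is vertical. -/
noncomputable def halfPlaneSign (u : ℝ × ℝ) : ℝ :=
  if 0 < u.1 ∨ (u.1 = 0 ∧ 0 < u.2) then 1 else -1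

theorem halfPlaneSign_eq_or (u : ℝ × ℝ) : halfPlaneSign u = 1 ∨ halfPlaneSign u = -1 :=
  ite_eq_or_eq _ _ _

theorem det2_swap (u w : ℝ × ℝ) : det2 w u = -det2 u w := by
  unfold det2
  ring

theorem det2_eq_zero_of_slope2_eq {u w : ℝ × ℝ} (h : slope2 u = slope2 w) : det2 u w = 0 := by
  unfold slope2 at h
  unfold det2
  split_ifs at h with hu hw hw
  · simp [hu, hw]
  · simp at h
  · simp at h
  · have h' : u.2 / u.1 = w.2 / w.1 := by exact_mod_cast h
    rw [div_eq_div_iff hu hw] at h'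
    linarith

theorem sign_det2_of_slope2_lt {u w : ℝ × ℝ} (h0 : det2 u w ≠ 0) (h : slope2 u < slope2 w) :
    Real.sign (det2 u w) = halfPlaneSign u * halfPlaneSign w := by
  unfold slope2 at h
  have hu : u.1 ≠ 0 := fun hu => by simp [hu] at h
  by_cases hw : w.1 = 0
  · have hd : det2 u w = u.1 * w.2 := by simp [det2, hw]
    rw [hd] at h0 ⊢
    have hw2 : w.2 ≠ 0 := right_ne_zero_of_mul h0
    rcases hu.lt_or_gt with a | a <;> rcases hw2.lt_or_gt with b | b
    · simp [halfPlaneSign, hw, hu, a.not_gt, b.not_gt, Real.sign_of_pos (mul_pos_of_neg_of_neg a b)]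
    · simp [halfPlaneSign, hw, hu, a.not_gt, b, Real.sign_of_neg (mul_neg_of_neg_of_pos a b)]
    · simp [halfPlaneSign, hw, a, b.not_gt, Real.sign_of_neg (mul_neg_of_pos_of_neg a b)]
    · simp [halfPlaneSign, hw, a, b, Real.sign_of_pos (mul_pos a b)]
  · rw [if_neg hu, if_neg hw, WithTop.coe_lt_coe] at h
    have hd : det2 u w = u.1 * w.1 * (w.2 / w.1 - u.2 / u.1) := by
      unfold det2
      field_simp
    have hs := sub_pos.2 h
    rw [hd]
    rcases lt_or_gt_of_ne hu with a | a <;> rcases lt_or_gt_of_ne hw with b | b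
    · simp [halfPlaneSign, hw, hu, a.not_gt, b.not_gt,
        Real.sign_of_pos (mul_pos (mul_pos_of_neg_of_neg a b) hs)]
    · simp [halfPlaneSign, hu, a.not_gt, b,
        Real.sign_of_neg (mul_neg_of_neg_of_pos (mul_neg_of_neg_of_pos a b) hs)]
    · simp [halfPlaneSign, hw, a, b.not_gt,
        Real.sign_of_neg (mul_neg_of_neg_of_pos (mul_neg_of_pos_of_neg a b) hs)]
    · simp [halfPlaneSign, a, b, Real.sign_of_pos (mul_pos (mul_pos a b) hs)]

/-- The ranking permutation of an injective tuple in a linear order. -/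
theorem exists_perm_lt_iff {α : Type*} [LinearOrder α] {n : ℕ} {f : Fin n → α}
    (hf : Function.Injective f) : ∃ σ : Equiv.Perm (Fin n), ∀ i j, σ i < σ j ↔ f i < f j := by
  have hs : StrictMono (f ∘ Tuple.sort f) :=
    (Tuple.monotone_sort f).strictMono_of_injective (hf.comp (Tuple.sort f).injective)
  refine ⟨(Tuple.sort f).symm, fun i j => ?_⟩
  rw [← hs.lt_iff_lt]
  simp

/-- every totally nonzero tuple in the plane has sign pattern
`sgn (det (v i | v j)) = ε i · ε j · sgn (σ j - σ i)` for some permutation `σ` and signs `ε`. -/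
theorem stmt_1 (n : ℕ) (hn : 1 ≤ n) (v : Fin n → ℝ × ℝ) (hv : TotallyNonzero n v) :
    ∃ σ : Equiv.Perm (Fin n), ∃ ε : Fin n → ℝ, (∀ i, ε i = 1 ∨ ε i = -1) ∧
      ∀ i j : Fin n, i ≠ j →
        Real.sign (det2 (v i) (v j)) =
          ε i * ε j * Real.sign (((σ j : ℕ) : ℝ) - ((σ i : ℕ) : ℝ)) := by
  have hinj : Function.Injective fun i => slope2 (v i) := fun i j h => by
    by_contra hij
    exact hv i j hij (det2_eq_zero_of_slope2_eq h)
  obtain ⟨σ, hσ⟩ := exists_perm_lt_iff hinj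
  refine ⟨σ, fun i => halfPlaneSign (v i), fun i => halfPlaneSign_eq_or _, fun i j hij => ?_⟩
  rcases lt_or_gt_of_ne (hinj.ne hij) with h | h
  · have hlt : ((σ i : ℕ) : ℝ) < ((σ j : ℕ) : ℝ) := by exact_mod_cast (hσ i j).2 h
    rw [sign_det2_of_slope2_lt (hv i j hij) h, Real.sign_of_pos (sub_pos.2 hlt), mul_one]
  · have hlt : ((σ j : ℕ) : ℝ) < ((σ i : ℕ) : ℝ) := by exact_mod_cast (hσ j i).2 h
    rw [det2_swap (v j) (v i), Real.sign_neg, sign_det2_of_slope2_lt (hv j i hij.symm) h,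
      Real.sign_of_neg (sub_neg.2 hlt)]
    ring
end

section
/- Let n ≥ 1. For every permutation σ of {1,…,n} and every ε : {1,…,n} → {1,−1}, there exists a totally nonzero tuple v : {1,…,n} → ℝ² such that for all i ≠ j, sgn(det(v_i | v_j)) = ε_i·ε_j·sgn(σ(j) − σ(i)). -/
/-- every sign pattern given by a permutation `σ` and signs `ε` is realized by
some totally nonzero tuple `v : Fin n → ℝ²`. -/
theorem stmt_2 (n : ℕ) (hn : 1 ≤ n) (σ : Equiv.Perm (Fin n)) (ε : Fin n → ℝ)
    (hε : ∀ i, ε i = 1 ∨ ε i = -1) :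
    ∃ v : Fin n → ℝ × ℝ, TotallyNonzero n v ∧
      ∀ i j : Fin n, i ≠ j →
        Real.sign (det2 (v i) (v j)) =
          ε i * ε j * Real.sign (((σ j : ℕ) : ℝ) - ((σ i : ℕ) : ℝ)) := by
  have hdet : ∀ i j : Fin n,
      det2 (ε i, ε i * ((σ i : ℕ) : ℝ)) (ε j, ε j * ((σ j : ℕ) : ℝ)) =
        ε i * ε j * (((σ j : ℕ) : ℝ) - ((σ i : ℕ) : ℝ)) := fun i j => by
    unfold det2
    ring
  refine ⟨fun i => (ε i, ε i * ((σ i : ℕ) : ℝ)), fun i j hij => ?_, fun i j _ => ?_⟩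
  · have hε0 : ∀ k, ε k ≠ 0 := fun k => by rcases hε k with h | h <;> simp [h]
    have hσ : ((σ j : ℕ) : ℝ) - ((σ i : ℕ) : ℝ) ≠ 0 :=
      sub_ne_zero.mpr fun h =>
        hij (σ.injective (Fin.ext (Nat.cast_injective h))).symm
    rw [hdet]
    exact mul_ne_zero (mul_ne_zero (hε0 i) (hε0 j)) hσ
  · rw [hdet]
    rcases hε i with hi | hi <;> rcases hε j with hj | hj <;>
      simp only [hi, hj, one_mul, mul_one, neg_mul, mul_neg, neg_neg, Real.sign_neg]
end

section
/- For every integer n ≥ 2, the set 𝒪_n of orientation sign matrices of totally nonzero tuples v : {1,…,n} → ℝ² has cardinality 2^{n−1}·(n−1)!. -/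
/-- The orientation sign matrix of a tuple: `(O_v)_{ij} = sgn (det (v i | v j))`. -/
noncomputable def orientMatrix (n : ℕ) (v : Fin n → ℝ × ℝ) : Matrix (Fin n) (Fin n) ℝ :=
  Matrix.of fun i j => Real.sign (det2 (v i) (v j))

open Matrix

theorem Real.sign_mul_eq (a b : ℝ) : Real.sign (a * b) = Real.sign a * Real.sign b := by
  rcases lt_trichotomy a 0 with ha | rfl | ha <;> rcases lt_trichotomy b 0 with hb | rfl | hb <;>
    simp [Real.sign_of_neg, Real.sign_of_pos, mul_pos_of_neg_of_neg, mul_neg_of_neg_of_pos,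
      mul_neg_of_pos_of_neg, *]

theorem Real.sign_units_int (u : ℤˣ) : Real.sign ((u : ℤ) : ℝ) = ((u : ℤ) : ℝ) := by
  rcases Int.units_eq_one_or u with rfl | rfl <;> simp [Real.sign_neg]

theorem exists_units_int_eq_sign {a : ℝ} (ha : a ≠ 0) :
    ∃ u : ℤˣ, ((u : ℤ) : ℝ) = Real.sign a := by
  rcases ha.lt_or_gt with h | h
  · exact ⟨-1, by simp [Real.sign_of_neg h]⟩
  · exact ⟨1, by simp [Real.sign_of_pos h]⟩

/-- The tuple with first vector `(1, 0)` and remaining vectors `s i • (-x i, 1)`. -/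
def halfPlaneTuple {m : ℕ} (s : Fin m → ℤˣ) (x : Fin m → ℝ) : Fin (m + 1) → ℝ × ℝ :=
  Fin.cons (1, 0) fun i => (-(((s i : ℤ) : ℝ) * x i), ((s i : ℤ) : ℝ))

section halfPlaneTuple

variable {m : ℕ} (s : Fin m → ℤˣ) (x : Fin m → ℝ)

theorem det2_halfPlaneTuple_zero_succ (i : Fin m) :
    det2 (halfPlaneTuple s x 0) (halfPlaneTuple s x i.succ) = ((s i : ℤ) : ℝ) := by
  simp [halfPlaneTuple, det2]

theorem det2_halfPlaneTuple_succ_succ (i j : Fin m) :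
    det2 (halfPlaneTuple s x i.succ) (halfPlaneTuple s x j.succ) =
      ((s i : ℤ) : ℝ) * ((s j : ℤ) : ℝ) * (x j - x i) := by
  simp only [halfPlaneTuple, det2, Fin.cons_succ]
  ring

end halfPlaneTuple

theorem det2_comm (v w : ℝ × ℝ) : det2 v w = -det2 w v := by
  simp only [det2]; ring

theorem units_int_cast_ne_zero (u : ℤˣ) : ((u : ℤ) : ℝ) ≠ 0 := by
  exact_mod_cast u.ne_zero

theorem totallyNonzero_halfPlaneTuple {m : ℕ} (s : Fin m → ℤˣ) {x : Fin m → ℝ}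
    (hx : Function.Injective x) : TotallyNonzero (m + 1) (halfPlaneTuple s x) := by
  intro i j hij
  cases i using Fin.cases with
  | zero =>
    cases j using Fin.cases with
    | zero => exact absurd rfl hij
    | succ j =>
      rw [det2_halfPlaneTuple_zero_succ]
      exact units_int_cast_ne_zero _
  | succ i =>
    cases j using Fin.cases with
    | zero =>
      rw [det2_comm, det2_halfPlaneTuple_zero_succ]
      exact neg_ne_zero.mpr (units_int_cast_ne_zero _)
    | succ j =>
      rw [det2_halfPlaneTuple_succ_succ]
      refine mul_ne_zero (mul_ne_zero (units_int_cast_ne_zero _) (units_int_cast_ne_zero _)) ?_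
      exact sub_ne_zero.mpr fun h => hij (congrArg Fin.succ (hx h).symm)

/-- An orientation sign matrix is antisymmetric, so its first column need not be compared. -/
theorem orientMatrix_ext {m : ℕ} {v w : Fin (m + 1) → ℝ × ℝ}
    (h₀ : ∀ i : Fin m, orientMatrix (m + 1) v 0 i.succ = orientMatrix (m + 1) w 0 i.succ)
    (h : ∀ i j : Fin m, orientMatrix (m + 1) v i.succ j.succ =
      orientMatrix (m + 1) w i.succ j.succ) :
    orientMatrix (m + 1) v = orientMatrix (m + 1) w := by
  ext i j
  cases i using Fin.cases with
  | zero =>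
    cases j using Fin.cases with
    | zero => simp [orientMatrix, det2, mul_comm]
    | succ j => exact h₀ j
  | succ i =>
    cases j using Fin.cases with
    | zero =>
      have := h₀ i
      simp only [orientMatrix, of_apply] at this ⊢
      rw [det2_comm, det2_comm (w _), Real.sign_neg, Real.sign_neg, this]
    | succ j => exact h i j

theorem orientMatrix_halfPlaneTuple_zero_succ {m : ℕ} (s : Fin m → ℤˣ) (x : Fin m → ℝ)
    (i : Fin m) :
    orientMatrix (m + 1) (halfPlaneTuple s x) 0 i.succ = ((s i : ℤ) : ℝ) := by
  rw [orientMatrix, of_apply, det2_halfPlaneTuple_zero_succ, Real.sign_units_int]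

theorem orientMatrix_halfPlaneTuple_succ_succ {m : ℕ} (s : Fin m → ℤˣ) (x : Fin m → ℝ)
    (i j : Fin m) :
    orientMatrix (m + 1) (halfPlaneTuple s x) i.succ j.succ =
      ((s i : ℤ) : ℝ) * ((s j : ℤ) : ℝ) * Real.sign (x j - x i) := by
  rw [orientMatrix, of_apply, det2_halfPlaneTuple_succ_succ]
  simp only [Real.sign_mul_eq, Real.sign_units_int]

theorem Real.sign_eq_one_iff (a : ℝ) : Real.sign a = 1 ↔ 0 < a := by
  rcases lt_trichotomy a 0 with h | rfl | h
  · rw [Real.sign_of_neg h]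
    exact ⟨fun h' => by norm_num at h', fun h' => absurd h' h.not_gt⟩
  · simp
  · simp [Real.sign_of_pos h, h]

/-- The orientation sign matrix attached to a choice of signs and an ordering. -/
noncomputable def signedPermMatrix (m : ℕ) (p : (Fin m → ℤˣ) × Equiv.Perm (Fin m)) :
    Matrix (Fin (m + 1)) (Fin (m + 1)) ℝ :=
  orientMatrix (m + 1) (halfPlaneTuple p.1 fun i => ((p.2 i : ℕ) : ℝ))

theorem signedPermMatrix_injective (m : ℕ) : Function.Injective (signedPermMatrix m) := by
  rintro ⟨s, σ⟩ ⟨t, τ⟩ h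
  have hst : s = t := by
    funext i
    have hi := congrFun (congrFun h 0) i.succ
    simp only [signedPermMatrix, orientMatrix_halfPlaneTuple_zero_succ] at hi
    exact Units.ext (by exact_mod_cast hi)
  subst hst
  have hlt : ∀ i j, σ i < σ j ↔ τ i < τ j := by
    intro i j
    have hij := congrFun (congrFun h i.succ) j.succ
    simp only [signedPermMatrix, orientMatrix_halfPlaneTuple_succ_succ] at hij
    have hsign := mul_left_cancel₀
      (mul_ne_zero (units_int_cast_ne_zero _) (units_int_cast_ne_zero _)) hij
    have hpos := Real.sign_eq_one_iff (((σ j : ℕ) : ℝ) - ((σ i : ℕ) : ℝ))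
    rw [hsign, Real.sign_eq_one_iff] at hpos
    simpa only [sub_pos, Nat.cast_lt, Fin.val_fin_lt] using hpos.symm
  have hmono : StrictMono (σ.symm.trans τ) := fun a b hab => by
    simpa using (hlt (σ.symm a) (σ.symm b)).mp (by simpa using hab)
  have hid : (hmono.orderIsoOfSurjective _ (σ.symm.trans τ).surjective) = OrderIso.refl _ :=
    Subsingleton.elim _ _
  refine Prod.ext rfl (Equiv.ext fun i => ?_)
  simpa using (DFunLike.congr_fun hid (σ i)).symm

theorem exists_perm_lt_iff_lt {m : ℕ} {x : Fin m → ℝ} (hx : Function.Injective x) :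
    ∃ σ : Equiv.Perm (Fin m), ∀ i j, σ i < σ j ↔ x i < x j := by
  have hmono : StrictMono (x ∘ Tuple.sort x) :=
    (Tuple.monotone_sort x).strictMono_of_injective (hx.comp (Tuple.sort x).injective)
  refine ⟨(Tuple.sort x).symm, fun i j => ?_⟩
  rw [← hmono.lt_iff_lt]
  simp

theorem Real.sign_sub_eq_of_lt_iff_lt {a b c d : ℝ} (h : a < b ↔ c < d) (h' : b < a ↔ d < c) :
    Real.sign (b - a) = Real.sign (d - c) := by
  rcases lt_trichotomy a b with hab | hab | hab
  · rw [Real.sign_of_pos (sub_pos.mpr hab), Real.sign_of_pos (sub_pos.mpr (h.mp hab))]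
  · have hcd : c = d :=
      le_antisymm (not_lt.mp (mt h'.mpr hab.not_gt)) (not_lt.mp (mt h.mpr hab.not_lt))
    simp [hab, hcd]
  · rw [Real.sign_of_neg (sub_neg.mpr hab), Real.sign_of_neg (sub_neg.mpr (h'.mp hab))]

/-- In coordinates relative to `u`, the sign of `det2 v w` compares the slopes of `v` and `w`. -/
theorem sign_det2_eq {u v w : ℝ × ℝ} (hv : det2 u v ≠ 0) (hw : det2 u w ≠ 0) :
    Real.sign (det2 v w) = Real.sign (det2 u v) * Real.sign (det2 u w) *
      Real.sign (-((u.1 * w.1 + u.2 * w.2) / det2 u w) -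
        -((u.1 * v.1 + u.2 * v.2) / det2 u v)) := by
  have hu : 0 < u.1 ^ 2 + u.2 ^ 2 := by
    by_contra hle
    have h₁ : u.1 = 0 := by nlinarith [sq_nonneg u.1, sq_nonneg u.2]
    have h₂ : u.2 = 0 := by nlinarith [sq_nonneg u.1, sq_nonneg u.2]
    exact hv (by simp [det2, h₁, h₂])
  rw [← Real.sign_mul_eq, ← Real.sign_mul_eq]
  have key : det2 u v * det2 u w * (-((u.1 * w.1 + u.2 * w.2) / det2 u w) -
      -((u.1 * v.1 + u.2 * v.2) / det2 u v)) = (u.1 ^ 2 + u.2 ^ 2) * det2 v w := by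
    field_simp
    simp only [det2]
    ring
  rw [key, Real.sign_mul_eq, Real.sign_of_pos hu, one_mul]

theorem exists_signedPermMatrix_eq {m : ℕ} {v : Fin (m + 1) → ℝ × ℝ}
    (hv : TotallyNonzero (m + 1) v) : ∃ p, signedPermMatrix m p = orientMatrix (m + 1) v := by
  have hd : ∀ i : Fin m, det2 (v 0) (v i.succ) ≠ 0 := fun i => hv _ _ (Fin.succ_ne_zero i).symm
  choose s hs using fun i => exists_units_int_eq_sign (hd i)
  set x : Fin m → ℝ := fun i =>
    -(((v 0).1 * (v i.succ).1 + (v 0).2 * (v i.succ).2) / det2 (v 0) (v i.succ))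
  have hdet : ∀ i j : Fin m, Real.sign (det2 (v i.succ) (v j.succ)) =
      ((s i : ℤ) : ℝ) * ((s j : ℤ) : ℝ) * Real.sign (x j - x i) := fun i j => by
    rw [hs, hs]
    exact sign_det2_eq (hd i) (hd j)
  have hx : Function.Injective x := fun i j hij => by
    by_contra hne
    have h := hdet i j
    rw [hij, sub_self, Real.sign_zero, mul_zero, Real.sign_eq_zero_iff] at h
    exact hv _ _ (fun h' => hne (Fin.succ_injective _ h')) h
  obtain ⟨σ, hσ⟩ := exists_perm_lt_iff_lt hx
  refine ⟨(s, σ), orientMatrix_ext (fun i => ?_) fun i j => ?_⟩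
  · rw [orientMatrix_halfPlaneTuple_zero_succ, hs, orientMatrix, of_apply]
  · rw [orientMatrix_halfPlaneTuple_succ_succ, orientMatrix, of_apply, hdet]
    congr 1
    apply Real.sign_sub_eq_of_lt_iff_lt <;> simp [hσ]

theorem setOf_orientMatrix_eq_range (m : ℕ) :
    {A : Matrix (Fin (m + 1)) (Fin (m + 1)) ℝ |
        ∃ v : Fin (m + 1) → ℝ × ℝ, TotallyNonzero (m + 1) v ∧ A = orientMatrix (m + 1) v} =
      Set.range (signedPermMatrix m) := by
  ext A
  constructor
  · rintro ⟨v, hv, rfl⟩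
    exact exists_signedPermMatrix_eq hv
  · rintro ⟨p, rfl⟩
    refine ⟨_, totallyNonzero_halfPlaneTuple _ fun i j hij => ?_, rfl⟩
    exact p.2.injective (Fin.ext (by exact_mod_cast hij))

/-- for `n ≥ 2`, the set `𝒪_n` of orientation sign matrices of totally nonzero
tuples `v : Fin n → ℝ²` has cardinality `2^(n-1) · (n-1)!`. -/
theorem stmt_3 (n : ℕ) (hn : 2 ≤ n) :
    {A : Matrix (Fin n) (Fin n) ℝ |
        ∃ v : Fin n → ℝ × ℝ, TotallyNonzero n v ∧ A = orientMatrix n v}.ncard =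
      2 ^ (n - 1) * Nat.factorial (n - 1) := by
  obtain ⟨m, rfl⟩ : ∃ m, n = m + 1 := ⟨n - 1, by omega⟩
  rw [setOf_orientMatrix_eq_range, Set.ncard_range_of_injective (signedPermMatrix_injective m),
    Nat.card_eq_fintype_card]
  simp [Fintype.card_perm, Fintype.card_units_int]
end

section
/- Let n ≥ 1 and let v : {1,…,n} → ℝ² be a totally nonzero tuple. Then there exist a permutation σ of {1,…,n} and signs ε : {1,…,n} → {1,−1} such that det(ε_i·v_{σ(i)} | ε_j·v_{σ(j)}) > 0 for all i < j. (Consequently, the group (ℝ*)^n ⋊ S_n acting by rescaling and permuting columns acts transitively on the set of strata of the totally nonzero Grassmannian Gr^{tnz}_{2n}(ℝ).) -/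
/-- The sign moving a vector into the half-open upper half-plane. -/
noncomputable def upperSign (a : ℝ × ℝ) : ℝ :=
  open Classical in if 0 < a.2 ∨ a.2 = 0 ∧ 0 ≤ a.1 then 1 else -1

/-- Minus the cotangent of the angle of a line, with the horizontal line sent to `⊥`. -/
noncomputable def lineKey (a : ℝ × ℝ) : WithBot ℝ :=
  open Classical in if a.2 = 0 then ⊥ else ((-(a.1 / a.2) : ℝ) : WithBot ℝ)

theorem upperSign_eq (a : ℝ × ℝ) : upperSign a = 1 ∨ upperSign a = -1 := by
  unfold upperSign
  split_ifs <;> simp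

theorem upperSign_smul_mem (a : ℝ × ℝ) :
    0 < (upperSign a • a).2 ∨ (upperSign a • a).2 = 0 ∧ 0 ≤ (upperSign a • a).1 := by
  unfold upperSign
  split_ifs with h
  · simpa using h
  · push Not at h
    rcases h.1.lt_or_eq with h₂ | h₂
    · left
      simpa using h₂
    · right
      simpa [h₂] using (h.2 h₂).le

theorem lineKey_smul {s : ℝ} (hs : s ≠ 0) (a : ℝ × ℝ) : lineKey (s • a) = lineKey a := by
  simp [lineKey, hs, mul_div_mul_left]

theorem det2_smul_smul (s t : ℝ) (a b : ℝ × ℝ) :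
    det2 (s • a) (t • b) = s * t * det2 a b := by
  simp only [det2, Prod.smul_fst, Prod.smul_snd, smul_eq_mul]
  ring

theorem det2_nonneg_of_lineKey_le {a b : ℝ × ℝ} (ha : 0 < a.2 ∨ a.2 = 0 ∧ 0 ≤ a.1)
    (hb : 0 < b.2 ∨ b.2 = 0 ∧ 0 ≤ b.1) (h : lineKey a ≤ lineKey b) : 0 ≤ det2 a b := by
  unfold det2
  rcases ha with ha | ⟨ha, ha'⟩
  · rcases hb with hb | ⟨hb, -⟩
    · simp only [lineKey, ha.ne', hb.ne', if_false, WithBot.coe_le_coe, neg_le_neg_iff,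
        div_le_div_iff₀ hb ha] at h
      linarith
    · simp [lineKey, ha.ne', hb] at h
  · have hb' : 0 ≤ b.2 := by
      rcases hb with hb | hb
      · exact hb.le
      · exact hb.1.ge
    simpa [ha] using mul_nonneg ha' hb'

theorem upperSign_ne_zero (a : ℝ × ℝ) : upperSign a ≠ 0 := by
  rcases upperSign_eq a with h | h <;> simp [h]

/-- for any totally nonzero tuple `v : Fin n → ℝ²` there are a permutation `σ`
and signs `ε` such that `det (ε i • v (σ i) | ε j • v (σ j)) > 0` for all `i < j`. -/
theorem stmt_5 (n : ℕ) (hn : 1 ≤ n) (v : Fin n → ℝ × ℝ) (hv : TotallyNonzero n v) :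
    ∃ σ : Equiv.Perm (Fin n), ∃ ε : Fin n → ℝ, (∀ i, ε i = 1 ∨ ε i = -1) ∧
      ∀ i j : Fin n, i < j → 0 < det2 (ε i • v (σ i)) (ε j • v (σ j)) := by
  refine ⟨Tuple.sort (lineKey ∘ v), fun i => upperSign (v (Tuple.sort (lineKey ∘ v) i)),
    fun i => upperSign_eq _, fun i j hij => lt_of_le_of_ne ?_ (Ne.symm ?_)⟩
  · refine det2_nonneg_of_lineKey_le (upperSign_smul_mem _) (upperSign_smul_mem _) ?_
    rw [lineKey_smul (upperSign_ne_zero _), lineKey_smul (upperSign_ne_zero _)]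
    exact Tuple.monotone_sort (lineKey ∘ v) hij.le
  · rw [det2_smul_smul]
    exact mul_ne_zero (mul_ne_zero (upperSign_ne_zero _) (upperSign_ne_zero _))
      (hv _ _ fun h => hij.ne ((Tuple.sort (lineKey ∘ v)).injective h))
end

section
/- Let n ≥ m ≥ 2 be integers and let M, N ∈ Mat^{tnz}_{mn}(ℝ) have columns v_1,…,v_n and w_1,…,w_n respectively, so that S = {v_1,…,v_n} and T = {w_1,…,w_n} are generic point arrangements of cardinality n in ℝ^m. Then S and T are isomorphic generic point arrangements if and only if there exist a permutation σ of {1,…,n} and a sign ε ∈ {1,−1} such that for every m-element subset I ⊆ {1,…,n}, sgn(Δ_I(M)) = ε·sgn(Δ_I(N_σ)), where N_σ denotes the m×n matrix whose i-th column is w_{σ(i)}. -/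
/-- The maximal minor `Δ_I(M)`: the determinant of the `m × m` submatrix of `M` on the column
set `I` (columns taken in increasing order). -/
noncomputable def maxMinor {m n : ℕ} (M : Matrix (Fin m) (Fin n) ℝ)
    (I : Finset (Fin n)) (hI : I.card = m) : ℝ :=
  (M.submatrix id (fun k => ((I.orderIsoOfFin hI k : I) : Fin n))).det

/-- `Mat^{tnz}_{mn}(ℝ)`: all maximal minors are nonzero. -/
def TNZMat {m n : ℕ} (M : Matrix (Fin m) (Fin n) ℝ) : Prop :=
  ∀ (I : Finset (Fin n)) (hI : I.card = m), maxMinor M I hI ≠ 0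

/-- The set of columns of `M`, as points of `ℝ^m`. -/
def columnSet {m n : ℕ} (M : Matrix (Fin m) (Fin n) ℝ) : Set (Fin m → ℝ) :=
  Set.range fun i => fun k => M k i

/-- Isomorphism of generic point arrangements `S, T ⊆ ℝ^m`: a bijection `f : S → T` such that
for every `(m+1)`-element subset `{c 0, …, c m}` of `S`, whenever
`c m = Σ_j a j • c j` and `f (c m) = Σ_j b j • f (c j)`, one has `a j · b j > 0` for all `j`. -/
def GenericIso (m : ℕ) (S T : Set (Fin m → ℝ)) : Prop :=
  ∃ f : (Fin m → ℝ) → (Fin m → ℝ), Set.BijOn f S T ∧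
    ∀ c : Fin (m + 1) → (Fin m → ℝ), Function.Injective c → (∀ k, c k ∈ S) →
      ∀ a b : Fin m → ℝ,
        c (Fin.last m) = ∑ j : Fin m, a j • c j.castSucc →
        f (c (Fin.last m)) = ∑ j : Fin m, b j • f (c j.castSucc) →
        ∀ j : Fin m, 0 < a j * b j

open Function

/-- The determinant of the columns of `M` listed by `g`. -/
noncomputable def colDet {m n : ℕ} (M : Matrix (Fin m) (Fin n) ℝ) (g : Fin m → Fin n) : ℝ :=
  (M.submatrix id g).det

section

open scoped Matrix

variable {m n : ℕ}

theorem colDet_comp_perm (M : Matrix (Fin m) (Fin n) ℝ) (g : Fin m → Fin n)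
    (τ : Equiv.Perm (Fin m)) :
    colDet M (g ∘ τ) = ((Equiv.Perm.sign τ : ℤ) : ℝ) * colDet M g :=
  Matrix.det_permute' τ (M.submatrix id g)

theorem colDet_mul_colDet_comp_perm (M N : Matrix (Fin m) (Fin n) ℝ) (g : Fin m → Fin n)
    (τ : Equiv.Perm (Fin m)) :
    colDet M (g ∘ τ) * colDet N (g ∘ τ) = colDet M g * colDet N g := by
  rw [colDet_comp_perm, colDet_comp_perm, mul_mul_mul_comm]
  rcases Int.units_eq_one_or (Equiv.Perm.sign τ) with h | h <;> simp [h]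

/-- An injective enumeration is the increasing enumeration of its image, up to reordering. -/
theorem exists_eq_orderIsoOfFin_comp {g : Fin m → Fin n} (hg : Injective g) :
    ∃ (I : Finset (Fin n)) (hI : I.card = m) (τ : Equiv.Perm (Fin m)),
      g = (fun k => ((I.orderIsoOfFin hI k : I) : Fin n)) ∘ τ := by
  have hI : (Finset.univ.image g).card = m := by
    simp [Finset.card_image_of_injective _ hg]
  let e := (Finset.univ.image g).orderIsoOfFin hI
  let t : Fin m → Fin m := fun k => e.symm ⟨g k, by simp⟩
  have ht : Injective t := fun a b h => hg (by simpa [t] using h)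
  refine ⟨_, hI, Equiv.ofBijective t (Finite.injective_iff_bijective.mp ht), ?_⟩
  funext k
  exact congrArg Subtype.val (e.apply_symm_apply ⟨g k, by simp⟩).symm

theorem TNZMat.colDet_ne_zero {M : Matrix (Fin m) (Fin n) ℝ} (hM : TNZMat M)
    {g : Fin m → Fin n} (hg : Injective g) : colDet M g ≠ 0 := by
  obtain ⟨I, hI, τ, rfl⟩ := exists_eq_orderIsoOfFin_comp hg
  rw [colDet_comp_perm]
  refine mul_ne_zero ?_ (hM I hI)
  rcases Int.units_eq_one_or (Equiv.Perm.sign τ) with h | h <;> simp [h]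

theorem TNZMat.col_injective {M : Matrix (Fin m) (Fin n) ℝ} (hM : TNZMat M) (hm : 2 ≤ m)
    (hmn : m ≤ n) : Injective fun i => fun k => M k i := by
  intro i j hij
  by_contra hne
  obtain ⟨I, hsub, hI⟩ := Finset.exists_superset_card_eq (s := {i, j}) (n := m)
    (by rw [Finset.card_pair hne]; exact hm) (by simpa using hmn)
  have hi : i ∈ I := hsub (by simp)
  have hj : j ∈ I := hsub (by simp)
  refine hM I hI (Matrix.det_zero_of_column_eq
    (i := (I.orderIsoOfFin hI).symm ⟨i, hi⟩) (j := (I.orderIsoOfFin hI).symm ⟨j, hj⟩)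
    (by simpa using hne) fun k => ?_)
  simpa only [Matrix.submatrix_apply, OrderIso.apply_symm_apply, id] using congrFun hij k

/-- Cramer's rule for the coefficients of a column in terms of other columns. -/
theorem colDet_update {M : Matrix (Fin m) (Fin n) ℝ} {g : Fin m → Fin n} {i : Fin n}
    {a : Fin m → ℝ} (h : (fun k => M k i) = ∑ j, a j • fun k => M k (g j)) (j : Fin m) :
    colDet M (update g j i) = a j * colDet M g := by
  have key := Matrix.det_updateCol_sum (M.submatrix id g) j a
  rw [smul_eq_mul] at key
  rw [colDet, colDet, ← key]
  congr 1
  ext k l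
  by_cases hl : l = j
  · subst hl
    simpa [Finset.sum_apply] using congrFun h k
  · simp [hl]

theorem exists_eq_sum_smul_col {M : Matrix (Fin m) (Fin n) ℝ} {g : Fin m → Fin n}
    (hg : colDet M g ≠ 0) (v : Fin m → ℝ) : ∃ a : Fin m → ℝ, v = ∑ j, a j • fun k => M k (g j) := by
  refine ⟨(M.submatrix id g)⁻¹ *ᵥ v, ?_⟩
  have h : M.submatrix id g *ᵥ ((M.submatrix id g)⁻¹ *ᵥ v) = v := by
    rw [Matrix.mulVec_mulVec, Matrix.mul_nonsing_inv _ (isUnit_iff_ne_zero.mpr hg),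
      Matrix.one_mulVec]
  ext k
  conv_lhs => rw [← h]
  simp [Matrix.mulVec, dotProduct, Finset.sum_apply, mul_comm]

theorem injective_update_of_notMem_range {g : Fin m → Fin n} (hg : Injective g) {i : Fin n}
    (hi : i ∉ Set.range g) (k : Fin m) : Injective (update g k i) := by
  intro x y hxy
  simp only [Set.mem_range, not_exists] at hi
  by_cases hx : x = k <;> by_cases hy : y = k
  · rw [hx, hy]
  · subst hx
    exact absurd (by simpa [hy] using hxy.symm) (hi y)
  · subst hy
    exact absurd (by simpa [hx] using hxy) (hi x)
  · exact hg (by simpa [hx, hy] using hxy)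

/-- A nonvanishing function invariant under reordering, whose sign is preserved by single
exchanges, has constant sign on injective enumerations. -/
theorem mul_pos_of_exchange {P : (Fin m → Fin n) → ℝ}
    (hne : ∀ g, Injective g → P g ≠ 0)
    (hperm : ∀ g (τ : Equiv.Perm (Fin m)), P (g ∘ τ) = P g)
    (hex : ∀ g, Injective g → ∀ i, i ∉ Set.range g → ∀ j, 0 < P g * P (update g j i))
    {g h : Fin m → Fin n} (hg : Injective g) (hh : Injective h) : 0 < P g * P h := by
  induction hd : (Finset.univ.filter fun k => g k ≠ h k).card using Nat.strong_induction_on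
    generalizing g with
  | _ d ih =>
    by_cases hgh : g = h
    · subst hgh
      exact mul_self_pos.mpr (hne g hg)
    obtain ⟨k, hk⟩ := Function.ne_iff.mp hgh
    by_cases hr : h k ∈ Set.range g
    · obtain ⟨l, hl⟩ := hr
      have hlk : l ≠ k := fun e => hk (by rw [← hl, e])
      have hlt : (Finset.univ.filter fun x => (g ∘ Equiv.swap k l) x ≠ h x).card < d := by
        rw [← hd]
        refine Finset.card_lt_card (Finset.ssubset_iff_of_subset ?_ |>.mpr ⟨k, ?_, ?_⟩)
        · intro x
          simp only [Finset.mem_filter, Finset.mem_univ, true_and, Function.comp_apply]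
          intro hx
          by_cases hxk : x = k
          · rwa [hxk]
          by_cases hxl : x = l
          · rw [hxl, hl]
            exact fun e => hlk (hh e).symm
          · rwa [Equiv.swap_apply_of_ne_of_ne hxk hxl] at hx
        · simpa using hk
        · simpa using hl
      have := ih _ hlt (hg.comp (Equiv.swap k l).injective) rfl
      rwa [hperm] at this
    · have hinj := injective_update_of_notMem_range hg hr k
      have hlt : (Finset.univ.filter fun x => update g k (h k) x ≠ h x).card < d := by
        rw [← hd]
        refine Finset.card_lt_card (Finset.ssubset_iff_of_subset ?_ |>.mpr ⟨k, ?_, ?_⟩)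
        · intro x
          simp only [Finset.mem_filter, Finset.mem_univ, true_and]
          intro hx
          by_cases hxk : x = k
          · rwa [hxk]
          · rwa [update_of_ne hxk] at hx
        · simpa using hk
        · simp
      have h₁ := ih _ hlt hinj rfl
      have h₂ := hex g hg _ hr k
      have h₃ := mul_pos h₂ h₁
      have h₄ : 0 < P (update g k (h k)) * P (update g k (h k)) :=
        mul_self_pos.mpr (hne _ hinj)
      exact pos_of_mul_pos_left (b := P (update g k (h k)) * P (update g k (h k)))
        (by linarith) h₄.le

theorem sign_eq_mul_sign_iff {x y ε : ℝ} (hx : x ≠ 0) (hy : y ≠ 0) (hε : ε = 1 ∨ ε = -1) :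
    Real.sign x = ε * Real.sign y ↔ 0 < ε * (x * y) := by
  rcases hε with rfl | rfl <;> rcases lt_or_gt_of_ne hx with hx | hx <;>
    rcases lt_or_gt_of_ne hy with hy | hy <;>
    simp [Real.sign_of_pos, Real.sign_of_neg, hx, hy, mul_pos_iff, mul_neg_iff, hx.not_gt,
      hy.not_gt] <;> norm_num

/-- Agreement of maximal minor signs up to a global sign, expressed through enumerations. -/
theorem exists_sign_maxMinor_iff {M N : Matrix (Fin m) (Fin n) ℝ} (hM : TNZMat M)
    (hN : TNZMat N) :
    (∃ ε : ℝ, (ε = 1 ∨ ε = -1) ∧ ∀ (I : Finset (Fin n)) (hI : I.card = m),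
        Real.sign (maxMinor M I hI) = ε * Real.sign (maxMinor N I hI)) ↔
      ∀ g h : Fin m → Fin n, Injective g → Injective h →
        0 < (colDet M g * colDet N g) * (colDet M h * colDet N h) := by
  constructor
  · rintro ⟨ε, hε, H⟩
    have key : ∀ g : Fin m → Fin n, Injective g → 0 < ε * (colDet M g * colDet N g) := by
      intro g hg
      obtain ⟨I, hI, τ, rfl⟩ := exists_eq_orderIsoOfFin_comp hg
      rw [colDet_mul_colDet_comp_perm]
      exact (sign_eq_mul_sign_iff (hM I hI) (hN I hI) hε).mp (H I hI)
    intro g h hg hh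
    have := mul_pos (key g hg) (key h hh)
    rcases hε with rfl | rfl <;> linarith
  · intro H
    have hinj : ∀ (I : Finset (Fin n)) (hI : I.card = m),
        Injective fun k => ((I.orderIsoOfFin hI k : I) : Fin n) := fun I hI =>
      Subtype.val_injective.comp (I.orderIsoOfFin hI).injective
    by_cases hpos : ∀ (I : Finset (Fin n)) (hI : I.card = m),
        0 < maxMinor M I hI * maxMinor N I hI
    · refine ⟨1, Or.inl rfl, fun I hI => ?_⟩
      rw [sign_eq_mul_sign_iff (hM I hI) (hN I hI) (Or.inl rfl), one_mul]
      exact hpos I hI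
    · push Not at hpos
      obtain ⟨J, hJ, hle⟩ := hpos
      refine ⟨-1, Or.inr rfl, fun I hI => ?_⟩
      rw [sign_eq_mul_sign_iff (hM I hI) (hN I hI) (Or.inr rfl)]
      have : 0 < (maxMinor M I hI * maxMinor N I hI) * (maxMinor M J hJ * maxMinor N J hJ) :=
        H _ _ (hinj I hI) (hinj J hJ)
      nlinarith [neg_of_mul_pos_left this hle]

theorem TNZMat.permute_columns {N : Matrix (Fin m) (Fin n) ℝ} (hN : TNZMat N)
    (σ : Equiv.Perm (Fin n)) : TNZMat (Matrix.of fun k i => N k (σ i)) := fun I hI =>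
  hN.colDet_ne_zero (g := fun k => σ ((I.orderIsoOfFin hI k : I) : Fin n))
    (σ.injective.comp (Subtype.val_injective.comp (I.orderIsoOfFin hI).injective))

/-- Cramer's rule turns the condition on linear dependencies into one on determinants. -/
theorem mul_pos_iff_colDet {M N : Matrix (Fin m) (Fin n) ℝ} {g : Fin m → Fin n} {i : Fin n}
    (hMg : colDet M g ≠ 0) (hNg : colDet N g ≠ 0) {a b : Fin m → ℝ}
    (ha : (fun k => M k i) = ∑ j, a j • fun k => M k (g j))
    (hb : (fun k => N k i) = ∑ j, b j • fun k => N k (g j)) (j : Fin m) :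
    0 < a j * b j ↔ 0 < (colDet M g * colDet N g) *
      (colDet M (update g j i) * colDet N (update g j i)) := by
  rw [colDet_update ha, colDet_update hb]
  have h : colDet M g * colDet N g * (a j * colDet M g * (b j * colDet N g)) =
      (colDet M g * colDet N g) ^ 2 * (a j * b j) := by ring
  rw [h, mul_pos_iff_of_pos_left (a := (colDet M g * colDet N g) ^ 2) (by positivity)]

/-- Isomorphisms of column arrangements are induced by permutations of the columns. -/
theorem genericIso_columnSet_iff {M N : Matrix (Fin m) (Fin n) ℝ}
    (hM : Injective fun i => fun k => M k i) (hN : Injective fun i => fun k => N k i) :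
    GenericIso m (columnSet M) (columnSet N) ↔ ∃ σ : Equiv.Perm (Fin n),
      ∀ (g : Fin m → Fin n) (i : Fin n), Injective g → i ∉ Set.range g → ∀ a b : Fin m → ℝ,
        (fun k => M k i) = ∑ j, a j • (fun k => M k (g j)) →
        (fun k => N k (σ i)) = ∑ j, b j • (fun k => N k (σ (g j))) →
        ∀ j, 0 < a j * b j := by
  constructor
  · rintro ⟨f, hf, H⟩
    have hex : ∀ i, ∃ i', (fun k => N k i') = f (fun k => M k i) := fun i =>
      hf.mapsTo (Set.mem_range_self i)
    choose s hs using hex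
    have hsinj : Injective s := fun x y hxy => hM <|
      hf.injOn (Set.mem_range_self x) (Set.mem_range_self y) <| by
        change f (fun k => M k x) = f (fun k => M k y)
        rw [← hs, ← hs, hxy]
    refine ⟨Equiv.ofBijective s (Finite.injective_iff_bijective.mp hsinj), ?_⟩
    intro g i hg hi a b ha hb
    refine H (fun x => fun k => M k ((Fin.snoc g i : Fin (m + 1) → Fin n) x))
      (hM.comp (Fin.snoc_injective_of_injective hg hi))
      (fun x => Set.mem_range_self _) a b (by simpa using ha) ?_
    simpa [← hs] using hb
  · rintro ⟨σ, H⟩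
    let f := extend (fun i => fun k => M k i) (fun i => fun k => N k (σ i)) 0
    have hf : ∀ i, f (fun k => M k i) = fun k => N k (σ i) := fun i => hM.extend_apply _ _ i
    refine ⟨f, ⟨?_, ?_, ?_⟩, ?_⟩
    · rintro _ ⟨i, rfl⟩
      exact ⟨σ i, (hf i).symm⟩
    · rintro _ ⟨i, rfl⟩ _ ⟨j, rfl⟩ hij
      simp only [hf] at hij
      rw [σ.injective (hN hij)]
    · rintro _ ⟨i, rfl⟩
      exact ⟨_, ⟨σ.symm i, rfl⟩, by simp [hf]⟩
    · intro c hc hcS a b ha hb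
      choose e he using hcS
      obtain rfl : (fun x => fun k => M k (e x)) = c := funext he
      have heinj : Injective e := fun x y hxy => hc (by simp [hxy])
      simp only [hf] at hb
      refine H (fun j => e j.castSucc) (e (Fin.last m))
        (heinj.comp (Fin.castSucc_injective m)) ?_ a b ha hb
      rintro ⟨j, hj⟩
      exact (Fin.castSucc_lt_last j).ne (heinj hj)

end

/-- for `M, N ∈ Mat^{tnz}_{mn}(ℝ)` with `n ≥ m ≥ 2`, the column arrangements of
`M` and `N` are isomorphic generic point arrangements iff there are a permutation `σ` of the
columns and a global sign `ε` such that all maximal minors of `M` and of `N_σ` have matching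
signs up to `ε`. -/
theorem stmt_6 (m n : ℕ) (hm : 2 ≤ m) (hmn : m ≤ n)
    (M N : Matrix (Fin m) (Fin n) ℝ) (hM : TNZMat M) (hN : TNZMat N) :
    GenericIso m (columnSet M) (columnSet N) ↔
      ∃ σ : Equiv.Perm (Fin n), ∃ ε : ℝ, (ε = 1 ∨ ε = -1) ∧
        ∀ (I : Finset (Fin n)) (hI : I.card = m),
          Real.sign (maxMinor M I hI) =
            ε * Real.sign (maxMinor (Matrix.of fun k i => N k (σ i)) I hI) := by
  rw [genericIso_columnSet_iff (hM.col_injective hm hmn) (hN.col_injective hm hmn)]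
  refine exists_congr fun σ => ?_
  have hNσ := hN.permute_columns σ
  rw [exists_sign_maxMinor_iff hM hNσ]
  constructor
  · intro H g h hg hh
    refine mul_pos_of_exchange (P := fun g => colDet M g * colDet _ g)
      (fun g hg => mul_ne_zero (hM.colDet_ne_zero hg) (hNσ.colDet_ne_zero hg))
      (colDet_mul_colDet_comp_perm _ _) ?_ hg hh
    intro g hg i hi j
    obtain ⟨a, ha⟩ := exists_eq_sum_smul_col (hM.colDet_ne_zero hg) fun k => M k i
    obtain ⟨b, hb⟩ := exists_eq_sum_smul_col (hNσ.colDet_ne_zero hg) fun k => N k (σ i)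
    exact (mul_pos_iff_colDet (hM.colDet_ne_zero hg) (hNσ.colDet_ne_zero hg) ha hb j).mp
      (H g i hg hi a b ha hb j)
  · intro H g i hg hi a b ha hb j
    exact (mul_pos_iff_colDet (hM.colDet_ne_zero hg) (hNσ.colDet_ne_zero hg) ha hb j).mpr
      (H _ _ hg (injective_update_of_notMem_range hg hi j))
end

section
/- Let n ≥ 1 and write n = 2^l·m with m odd, l ≥ 0. For each integer i with 0 ≤ i ≤ 2n−1, the number of d ∈ {1,−1}^n with ζ^i(d) = d equals: 2^n if i = 0; 2^{gcd(i,n)} if i ≠ 0 and 2^{l+1} divides i; and 0 otherwise (i.e., if i ≠ 0 and 2^{l+1} does not divide i). -/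
/-- The signed cyclic shift `ζ` on `{±1}^n`: `(ζ d)_0 = -d_{n-1}` and `(ζ d)_k = d_{k-1}`
for `k ≥ 1` (0-based indexing). -/
def zeta (n : ℕ) (d : Fin n → ℤˣ) : Fin n → ℤˣ := fun k =>
  if (k : ℕ) = 0 then -d ⟨n - 1, Nat.sub_lt k.pos Nat.one_pos⟩
  else d ⟨(k : ℕ) - 1, Nat.lt_of_le_of_lt (Nat.sub_le _ _) k.isLt⟩

open Function in
theorem Function.Antiperiodic.units_add_int_mul_eq {F : ℤ → ℤˣ} {c : ℤ} (h : Antiperiodic F c)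
    (k x : ℤ) : F (x + k * c) = Int.negOnePow k * F x := by
  rcases Int.even_or_odd' k with ⟨k, rfl | rfl⟩
  · have := h.even_zsmul_periodic k x
    simpa using this
  · have := h.odd_zsmul_antiperiodic k x
    simpa [Int.negOnePow_succ] using this

open Function in
/-- An antiperiodic function `ℤ → ℤˣ` is determined by its values on one period. -/
def antiperiodicEquiv (n : ℕ) (hn : 0 < n) :
    {F : ℤ → ℤˣ // Antiperiodic F (n : ℤ)} ≃ (Fin n → ℤˣ) where
  toFun F := fun k => F.1 (k : ℕ)
  invFun d := ⟨fun x => Int.negOnePow (x / n) * d ⟨(x % n).toNat, by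
      have := Int.emod_lt_of_pos x (Int.natCast_pos.2 hn)
      omega⟩, fun x => by
    simp [Int.add_ediv_of_dvd_right, hn.ne', Int.negOnePow_succ]⟩
  left_inv F := by
    ext1
    funext x
    have h0 := Int.emod_nonneg x (Int.natCast_ne_zero.2 hn.ne')
    have h1 : x = x % n + (x / n) * (n : ℤ) := by
      rw [mul_comm (x / (n : ℤ)), Int.emod_add_mul_ediv]
    conv_rhs => rw [h1, F.2.units_add_int_mul_eq]
    simp [Int.toNat_of_nonneg h0]
  right_inv d := by
    funext k
    have h0 : ((k : ℕ) : ℤ) / n = 0 :=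
      Int.ediv_eq_zero_of_lt (by positivity) (by exact_mod_cast k.2)
    have h1 : ((k : ℕ) : ℤ) % n = (k : ℕ) :=
      Int.emod_eq_of_lt (by positivity) (by exact_mod_cast k.2)
    simp [h0, h1]

open Function in
theorem antiperiodicEquiv_apply {n : ℕ} (hn : 0 < n)
    (F : {F : ℤ → ℤˣ // Antiperiodic F (n : ℤ)}) :
    antiperiodicEquiv n hn F = fun k : Fin n => F.1 (k : ℕ) :=
  rfl

open Function in
theorem zeta_antiperiodicEquiv {n : ℕ} (hn : 0 < n) (F : {F : ℤ → ℤˣ // Antiperiodic F (n : ℤ)}) :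
    zeta n (antiperiodicEquiv n hn F) =
      antiperiodicEquiv n hn ⟨fun x => F.1 (x - 1), F.2.sub_const 1⟩ := by
  rw [antiperiodicEquiv_apply, antiperiodicEquiv_apply]
  funext k
  by_cases hk : (k : ℕ) = 0
  · have h := F.2 (-1)
    have e : ((n - 1 : ℕ) : ℤ) = -1 + n := by omega
    simp [zeta, hk, e, h]
  · have e : (((k : ℕ) - 1 : ℕ) : ℤ) = (k : ℕ) - 1 := by omega
    simp [zeta, hk, e]

open Function in
theorem iterate_zeta_antiperiodicEquiv {n : ℕ} (hn : 0 < n) (i : ℕ)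
    (F : {F : ℤ → ℤˣ // Antiperiodic F (n : ℤ)}) :
    (zeta n)^[i] (antiperiodicEquiv n hn F) =
      antiperiodicEquiv n hn ⟨fun x => F.1 (x - i), F.2.sub_const i⟩ := by
  induction i with
  | zero =>
    rw [antiperiodicEquiv_apply, antiperiodicEquiv_apply]
    simp
  | succ i ih =>
    rw [iterate_succ_apply', ih, zeta_antiperiodicEquiv, antiperiodicEquiv_apply,
      antiperiodicEquiv_apply]
    simp [sub_sub, add_comm]

open Function in
theorem iterate_zeta_antiperiodicEquiv_eq_self_iff {n : ℕ} (hn : 0 < n) (i : ℕ)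
    (F : {F : ℤ → ℤˣ // Antiperiodic F (n : ℤ)}) :
    (zeta n)^[i] (antiperiodicEquiv n hn F) = antiperiodicEquiv n hn F ↔
      Periodic F.1 (i : ℤ) := by
  rw [iterate_zeta_antiperiodicEquiv, (antiperiodicEquiv n hn).apply_eq_iff_eq, Subtype.ext_iff]
  constructor
  · intro h x
    simpa using (congrFun h (x + i)).symm
  · intro h
    funext x
    exact h.sub_eq x

open Function in
theorem card_fixedPoints_iterate_zeta {n : ℕ} (hn : 0 < n) (i : ℕ) :
    Nat.card {d : Fin n → ℤˣ // (zeta n)^[i] d = d} =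
      Nat.card {F : ℤ → ℤˣ // Antiperiodic F (n : ℤ) ∧ Periodic F (i : ℤ)} :=
  (Nat.card_congr ((Equiv.subtypeSubtypeEquivSubtypeInter _ _).symm.trans
    ((antiperiodicEquiv n hn).subtypeEquiv fun F =>
      (iterate_zeta_antiperiodicEquiv_eq_self_iff hn i F).symm))).symm

open Function in
theorem antiperiodic_and_periodic_iff_antiperiodic_gcd {n l m i : ℕ} (hm : Odd m)
    (hn : n = 2 ^ l * m) (hi : 2 ^ (l + 1) ∣ i) (F : ℤ → ℤˣ) :
    Antiperiodic F (n : ℤ) ∧ Periodic F (i : ℤ) ↔ Antiperiodic F (Nat.gcd i n : ℤ) := by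
  obtain ⟨j, rfl⟩ := hi
  have hg : Nat.gcd (2 ^ (l + 1) * j) n = 2 ^ l * Nat.gcd j m := by
    have h2 : Nat.Coprime 2 m := hm.coprime_two_left
    rw [hn, pow_succ, mul_assoc, Nat.gcd_mul_left, h2.gcd_mul_left_cancel]
  obtain ⟨c, hc⟩ := Nat.gcd_dvd_right j m
  obtain ⟨e, he⟩ := Nat.gcd_dvd_left j m
  set g := Nat.gcd j m
  have hgo : Odd g := hm.of_dvd_nat ⟨c, hc⟩
  have hco : Odd c := hm.of_dvd_nat ⟨g, by rw [hc]; ring⟩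
  have hnz : (n : ℤ) = c * ((2 ^ l * g : ℕ) : ℤ) := by
    rw [hn, hc]; push_cast; ring
  have hiz : ((2 ^ (l + 1) * j : ℕ) : ℤ) = (2 * e : ℕ) * ((2 ^ l * g : ℕ) : ℤ) := by
    rw [he]; push_cast; ring
  rw [hg]
  constructor
  · rintro ⟨ha, hp⟩
    have hb := Nat.gcd_eq_gcd_ab (2 ^ (l + 1) * j) n
    rw [hg] at hb
    set a := Nat.gcdA (2 ^ (l + 1) * j) n
    set b := Nat.gcdB (2 ^ (l + 1) * j) n
    have hodd : Odd b := by
      have h : (g : ℤ) = 2 * (j * a) + m * b := by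
        have h2 : (2 ^ l : ℤ) ≠ 0 := by positivity
        apply mul_left_cancel₀ h2
        rw [hn] at hb
        push_cast at hb
        rw [hb]; ring
      have h3 : Odd ((m : ℤ) * b) := by
        have : (m : ℤ) * b = g - 2 * (j * a) := by rw [h]; ring
        rw [this]
        exact ((Int.odd_coe_nat g).2 hgo).sub_even (even_two_mul _)
      exact (Int.odd_mul.1 h3).2
    intro x
    have h1 := ha.units_add_int_mul_eq b x
    have h2 := (hp.zsmul a) (x + b * (n : ℤ))
    rw [hb]
    have : x + (((2 ^ (l + 1) * j : ℕ) : ℤ) * a + n * b) =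
      x + b * (n : ℤ) + a • ((2 ^ (l + 1) * j : ℕ) : ℤ) := by
      simp only [smul_eq_mul]; ring
    rw [this, h2, h1]
    simp [Int.negOnePow_odd b hodd]
  · intro h
    refine ⟨?_, ?_⟩
    · rw [hnz]
      obtain ⟨k, rfl⟩ := hco
      simpa using h.odd_nsmul_antiperiodic k
    · rw [hiz]
      simpa using h.even_nsmul_periodic e

open Function in
theorem not_antiperiodic_and_periodic {n l m i : ℕ} (hn : n = 2 ^ l * m) (hi : i ≠ 0)
    (hdvd : ¬ 2 ^ (l + 1) ∣ i) (F : ℤ → ℤˣ) :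
    ¬ (Antiperiodic F (n : ℤ) ∧ Periodic F (i : ℤ)) := by
  rintro ⟨ha, hp⟩
  obtain ⟨a, c, hc, rfl⟩ := Nat.exists_eq_two_pow_mul_odd hi
  have hal : a ≤ l := by
    by_contra! h
    exact hdvd ((pow_dvd_pow 2 h).mul_right c)
  obtain ⟨t, rfl⟩ := Nat.exists_eq_add_of_le hal
  have h1 := (hp.nsmul (2 ^ t * m)) 0
  obtain ⟨k, rfl⟩ := hc
  have h2 := ha.nat_odd_mul_antiperiodic k 0
  have e : (2 ^ t * m) • ((2 ^ a * (2 * k + 1) : ℕ) : ℤ) = k * (2 * (n : ℤ)) + n := by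
    rw [hn, nsmul_eq_mul]; push_cast; ring
  rw [e, h2] at h1
  exact units_ne_neg_self _ h1.symm

/-- write `n = 2^l·m` with `m` odd. For `0 ≤ i ≤ 2n-1`, the number of fixed
points of `ζ^i` on `{±1}^n` is `2^n` if `i = 0`; `2^gcd(i,n)` if `i ≠ 0` and `2^(l+1) ∣ i`;
and `0` otherwise. -/
theorem stmt_8 (n l m : ℕ) (hn : 1 ≤ n) (hm : Odd m) (hnlm : n = 2 ^ l * m)
    (i : ℕ) (hi : i ≤ 2 * n - 1) :
    (i = 0 → Nat.card {d : Fin n → ℤˣ // (zeta n)^[i] d = d} = 2 ^ n) ∧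
    (i ≠ 0 → 2 ^ (l + 1) ∣ i →
      Nat.card {d : Fin n → ℤˣ // (zeta n)^[i] d = d} = 2 ^ Nat.gcd i n) ∧
    (i ≠ 0 → ¬ 2 ^ (l + 1) ∣ i →
      Nat.card {d : Fin n → ℤˣ // (zeta n)^[i] d = d} = 0) := by
  refine ⟨?_, fun _ hdvd => ?_, fun h0 hdvd => ?_⟩
  · rintro rfl
    simp
  · rw [card_fixedPoints_iterate_zeta hn]
    simp only [antiperiodic_and_periodic_iff_antiperiodic_gcd hm hnlm hdvd]
    rw [Nat.card_congr (antiperiodicEquiv _ (Nat.gcd_pos_of_pos_right i hn))]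
    simp
  · rw [card_fixedPoints_iterate_zeta hn]
    have : IsEmpty {F : ℤ → ℤˣ //
        Function.Antiperiodic F (n : ℤ) ∧ Function.Periodic F (i : ℤ)} :=
      ⟨fun F => not_antiperiodic_and_periodic hnlm h0 hdvd F.1 F.2⟩
    exact Nat.card_of_isEmpty
end

section
/- Let n ≥ 2. Any two antipodal point arrangements of cardinality 2n in ℝ² are isomorphic; that is, there is exactly one isomorphism class of antipodal point arrangements of cardinality 2n in the Euclidean plane. -/
/-- The antipodal point arrangement `{±v_1, …, ±v_n} ⊆ ℝ²` determined by a tuple `v`. -/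
def antipodalSet2 (n : ℕ) (v : Fin n → ℝ × ℝ) : Set (ℝ × ℝ) :=
  Set.range v ∪ Set.range fun i => -v i

/-- Isomorphism of antipodal point arrangements in `ℝ²`: a bijection `f : S → T` with
`f (-v) = -f v`, such that for every 3-element subset `{v₁, v₂, v₃} ⊆ S` containing no
antipodal pair, whenever `v₃ = a₁ • v₁ + a₂ • v₂` and `f v₃ = b₁ • f v₁ + b₂ • f v₂`,
one has `(a₁ > 0 ∧ a₂ > 0) ↔ (b₁ > 0 ∧ b₂ > 0)`. -/
def AntipodalIso2 (S T : Set (ℝ × ℝ)) : Prop :=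
  ∃ f : ℝ × ℝ → ℝ × ℝ, Set.BijOn f S T ∧ (∀ v ∈ S, f (-v) = -f v) ∧
    ∀ v₁ v₂ v₃ : ℝ × ℝ, v₁ ∈ S → v₂ ∈ S → v₃ ∈ S →
      v₁ ≠ v₂ → v₁ ≠ v₃ → v₂ ≠ v₃ →
      v₁ ≠ -v₂ → v₁ ≠ -v₃ → v₂ ≠ -v₃ →
      ∀ a₁ a₂ b₁ b₂ : ℝ,
        v₃ = a₁ • v₁ + a₂ • v₂ →
        f v₃ = b₁ • f v₁ + b₂ • f v₂ →
        ((0 < a₁ ∧ 0 < a₂) ↔ (0 < b₁ ∧ 0 < b₂))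

/-- The determinant of two vectors of the plane. -/
def planeDet (p q : ℝ × ℝ) : ℝ := p.1 * q.2 - p.2 * q.1

lemma planeDet_ne_zero_of_linearIndependent {p q : ℝ × ℝ}
    (h : LinearIndependent ℝ ![p, q]) : planeDet p q ≠ 0 := by
  intro h0
  rw [LinearIndependent.pair_iff] at h
  unfold planeDet at h0
  have h1 := h q.2 (-p.2) (by ext <;> simp <;> linarith)
  have h2 := h q.1 (-p.1) (by ext <;> simp <;> linarith)
  have h3 := h 1 1 (by ext <;> simp <;> linarith)
  exact one_ne_zero h3.1

/-- The half-open upper half plane, a set of representatives of nonzero vectors up to sign. -/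
def IsUpper (p : ℝ × ℝ) : Prop := 0 < p.2 ∨ (p.2 = 0 ∧ 0 < p.1)

lemma exists_units_smul_isUpper {p : ℝ × ℝ} (hp : p ≠ 0) : ∃ e : ℤˣ, IsUpper (e • p) := by
  unfold IsUpper
  rcases lt_trichotomy p.2 0 with h | h | h
  · exact ⟨-1, by simp [Units.smul_def, h]⟩
  · have h1 : p.1 ≠ 0 := fun h1 => hp (Prod.ext h1 h)
    rcases h1.lt_or_gt with h1 | h1
    · exact ⟨-1, by simp [Units.smul_def, h, h1]⟩
    · exact ⟨1, by simp [h, h1]⟩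
  · exact ⟨1, by simp [h]⟩

/-- A function on the upper half plane that increases with the polar angle. -/
noncomputable def angleKey (p : ℝ × ℝ) : ℝ := -(p.1 / (|p.1| + p.2))

lemma IsUpper.planeDet_pos_of_angleKey_le {p q : ℝ × ℝ} (hp : IsUpper p) (hq : IsUpper q)
    (hd : planeDet p q ≠ 0) (h : angleKey p ≤ angleKey q) : 0 < planeDet p q := by
  have pos : ∀ {r : ℝ × ℝ}, IsUpper r → 0 ≤ r.2 ∧ 0 < |r.1| + r.2 := by
    rintro r (h | ⟨h, h'⟩)
    · exact ⟨h.le, by positivity⟩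
    · exact ⟨h.ge, by rw [h, add_zero]; exact abs_pos.2 h'.ne'⟩
  obtain ⟨hp2, hp⟩ := pos hp
  obtain ⟨hq2, hq⟩ := pos hq
  unfold angleKey at h
  rw [neg_le_neg_iff, div_le_div_iff₀ hq hp] at h
  refine lt_of_le_of_ne ?_ hd.symm
  unfold planeDet
  rcases le_total 0 p.1 with h1 | h1 <;> rcases le_total 0 q.1 with h2 | h2 <;>
    simp only [abs_of_nonneg, abs_of_nonpos, h1, h2] at h
  · linarith
  · linarith [mul_nonneg h1 hq2, mul_nonpos_of_nonneg_of_nonpos hp2 h2]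
  · linarith [mul_nonpos_of_nonpos_of_nonneg h1 h2]
  · linarith

lemma planeDet_units_smul (e d : ℤˣ) (p q : ℝ × ℝ) :
    planeDet (e • p) (d • q) = ((e * d : ℤˣ) : ℤ) * planeDet p q := by
  rcases Int.units_eq_one_or e with rfl | rfl <;> rcases Int.units_eq_one_or d with rfl | rfl <;>
    simp [planeDet, Units.smul_def] <;> ring

/-- The points of an antipodal arrangement, labelled by an index and a sign. -/
def signedPoint {n : ℕ} (u : Fin n → ℝ × ℝ) (a : Fin n × ℤˣ) : ℝ × ℝ := a.2 • u a.1

lemma range_signedPoint {n : ℕ} (u : Fin n → ℝ × ℝ) :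
    Set.range (signedPoint u) = antipodalSet2 n u := by
  ext x
  constructor
  · rintro ⟨⟨i, e⟩, rfl⟩
    rcases Int.units_eq_one_or e with rfl | rfl
    · exact Or.inl ⟨i, by simp [signedPoint]⟩
    · exact Or.inr ⟨i, by simp [signedPoint, Units.smul_def]⟩
  · rintro (⟨i, rfl⟩ | ⟨i, rfl⟩)
    · exact ⟨(i, 1), by simp [signedPoint]⟩
    · exact ⟨(i, -1), by simp [signedPoint, Units.smul_def]⟩

lemma neg_signedPoint {n : ℕ} (u : Fin n → ℝ × ℝ) (a : Fin n × ℤˣ) :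
    -signedPoint u a = signedPoint u (a.1, -a.2) := by
  simp [signedPoint, Units.smul_def]

/-- A tuple of nonzero vectors listed in counterclockwise order within an open half plane. -/
structure IsCounterclockwise {n : ℕ} (u : Fin n → ℝ × ℝ) : Prop where
  ne_zero : ∀ i, u i ≠ 0
  planeDet_pos : ∀ i j, i < j → 0 < planeDet (u i) (u j)

lemma exists_isCounterclockwise {n : ℕ} (v : Fin n → ℝ × ℝ) (hv0 : ∀ i, v i ≠ 0)
    (hv : ∀ i j, i ≠ j → LinearIndependent ℝ ![v i, v j]) :
    ∃ u : Fin n → ℝ × ℝ, antipodalSet2 n v = antipodalSet2 n u ∧ IsCounterclockwise u := by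
  choose e he using fun i => exists_units_smul_isUpper (hv0 i)
  let σ := Tuple.sort fun i => angleKey (e i • v i)
  have hσ : Monotone _ := Tuple.monotone_sort fun i => angleKey (e i • v i)
  refine ⟨fun i => e (σ i) • v (σ i), ?_, fun i => ?_, fun i j hij => ?_⟩
  · rw [← range_signedPoint, ← range_signedPoint]
    ext x
    constructor
    · rintro ⟨⟨i, d⟩, rfl⟩
      exact ⟨(σ.symm i, d * e i), by simp [signedPoint, smul_smul, mul_assoc]⟩
    · rintro ⟨⟨i, d⟩, rfl⟩
      exact ⟨(σ i, d * e (σ i)), by simp [signedPoint, smul_smul]⟩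
  · exact (smul_ne_zero_iff_ne _).2 (hv0 _)
  · refine (he _).planeDet_pos_of_angleKey_le (he _) ?_ (hσ hij.le)
    rw [planeDet_units_smul]
    exact mul_ne_zero (by simp) (planeDet_ne_zero_of_linearIndependent
      (hv _ _ (σ.injective.ne hij.ne)))

lemma planeDet_swap (p q : ℝ × ℝ) : planeDet q p = -planeDet p q := by
  unfold planeDet
  ring

namespace IsCounterclockwise

variable {n : ℕ} {u u' : Fin n → ℝ × ℝ}

lemma planeDet_ne_zero (hu : IsCounterclockwise u) {i j : Fin n} (hij : i ≠ j) :
    planeDet (u i) (u j) ≠ 0 := by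
  rcases hij.lt_or_gt with h | h
  · exact (hu.planeDet_pos _ _ h).ne'
  · rw [planeDet_swap, neg_ne_zero]
    exact (hu.planeDet_pos _ _ h).ne'

lemma signedPoint_injective (hu : IsCounterclockwise u) : Function.Injective (signedPoint u) := by
  rintro ⟨i, e⟩ ⟨j, d⟩ h
  have hij : i = j := by
    by_contra hij
    have h0 : planeDet (signedPoint u (i, e)) (signedPoint u (j, d)) = 0 := by
      rw [h]
      unfold planeDet
      ring
    simp only [signedPoint] at h0
    rw [planeDet_units_smul] at h0
    exact mul_ne_zero (by simp) (hu.planeDet_ne_zero hij) h0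
  subst hij
  have h0 := hu.ne_zero i
  rcases Int.units_eq_one_or e with rfl | rfl <;> rcases Int.units_eq_one_or d with rfl | rfl <;>
    simp_all [signedPoint, Units.smul_def, self_eq_neg, neg_eq_self]

lemma planeDet_signedPoint_ne_zero (hu : IsCounterclockwise u) {a b : Fin n × ℤˣ}
    (h : signedPoint u a ≠ signedPoint u b) (h' : signedPoint u a ≠ -signedPoint u b) :
    planeDet (signedPoint u a) (signedPoint u b) ≠ 0 := by
  obtain ⟨i, e⟩ := a
  obtain ⟨j, d⟩ := b
  have hij : i ≠ j := by
    rintro rfl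
    rcases Int.units_eq_one_or e with rfl | rfl <;>
      rcases Int.units_eq_one_or d with rfl | rfl <;>
      simp [signedPoint, Units.smul_def] at h h'
  simp only [signedPoint]
  rw [planeDet_units_smul]
  exact mul_ne_zero (by simp) (hu.planeDet_ne_zero hij)

lemma sign_planeDet_eq (hu : IsCounterclockwise u) (hu' : IsCounterclockwise u')
    (a b : Fin n × ℤˣ) :
    SignType.sign (planeDet (signedPoint u a) (signedPoint u b)) =
      SignType.sign (planeDet (signedPoint u' a) (signedPoint u' b)) := by
  simp only [signedPoint]
  rw [planeDet_units_smul, planeDet_units_smul, sign_mul, sign_mul]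
  congr 1
  rcases lt_trichotomy a.1 b.1 with h | h | h
  · rw [sign_pos (hu.planeDet_pos _ _ h), sign_pos (hu'.planeDet_pos _ _ h)]
  · simp [h, planeDet, mul_comm]
  · rw [planeDet_swap, planeDet_swap (u' b.1), Left.sign_neg, Left.sign_neg,
      sign_pos (hu.planeDet_pos _ _ h), sign_pos (hu'.planeDet_pos _ _ h)]

end IsCounterclockwise

lemma pos_iff_pos_of_sign_mul_eq {a b D D' : ℝ} (hD : D ≠ 0)
    (h : SignType.sign D = SignType.sign D')
    (hab : SignType.sign (a * D) = SignType.sign (b * D')) : 0 < a ↔ 0 < b := by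
  rw [sign_mul, sign_mul, ← h] at hab
  rw [← sign_eq_one_iff, ← sign_eq_one_iff, mul_right_cancel₀ (sign_ne_zero.2 hD) hab]

lemma planeDet_combination_left {p q r : ℝ × ℝ} {a b : ℝ} (h : r = a • p + b • q) :
    planeDet r q = a * planeDet p q := by
  subst h
  simp [planeDet]
  ring

lemma planeDet_combination_right {p q r : ℝ × ℝ} {a b : ℝ} (h : r = a • p + b • q) :
    planeDet p r = b * planeDet p q := by
  subst h
  simp [planeDet]
  ring

/-- for `n ≥ 2`, any two antipodal point arrangements of cardinality `2n` in
`ℝ²` are isomorphic. -/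
theorem stmt_15 (n : ℕ) (hn : 2 ≤ n) (v w : Fin n → ℝ × ℝ)
    (hv0 : ∀ i, v i ≠ 0) (hv : ∀ i j, i ≠ j → LinearIndependent ℝ ![v i, v j])
    (hw0 : ∀ i, w i ≠ 0) (hw : ∀ i j, i ≠ j → LinearIndependent ℝ ![w i, w j]) :
    AntipodalIso2 (antipodalSet2 n v) (antipodalSet2 n w) := by
  obtain ⟨u, hvu, hu⟩ := exists_isCounterclockwise v hv0 hv
  obtain ⟨u', hwu', hu'⟩ := exists_isCounterclockwise w hw0 hw
  rw [hvu, hwu', ← range_signedPoint, ← range_signedPoint]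
  have hf : ∀ a, Function.extend (signedPoint u) (signedPoint u') 0 (signedPoint u a) =
      signedPoint u' a := hu.signedPoint_injective.extend_apply _ _
  refine ⟨Function.extend (signedPoint u) (signedPoint u') 0, ⟨?_, ?_, ?_⟩, ?_, ?_⟩
  · rintro _ ⟨a, rfl⟩
    exact ⟨a, (hf a).symm⟩
  · rintro _ ⟨a, rfl⟩ _ ⟨b, rfl⟩ h
    rw [hf, hf] at h
    rw [hu'.signedPoint_injective h]
  · rintro _ ⟨a, rfl⟩
    exact ⟨_, ⟨a, rfl⟩, hf a⟩
  · rintro _ ⟨a, rfl⟩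
    rw [neg_signedPoint, hf, hf, neg_signedPoint]
  · rintro _ _ _ ⟨a, rfl⟩ ⟨b, rfl⟩ ⟨c, rfl⟩ hab - - hab' - - a₁ a₂ b₁ b₂ h h'
    rw [hf, hf, hf] at h'
    have hD := hu.planeDet_signedPoint_ne_zero hab hab'
    have hs := hu.sign_planeDet_eq hu' a b
    refine and_congr (pos_iff_pos_of_sign_mul_eq hD hs ?_) (pos_iff_pos_of_sign_mul_eq hD hs ?_)
    · rw [← planeDet_combination_left h, ← planeDet_combination_left h']
      exact hu.sign_planeDet_eq hu' c b
    · rw [← planeDet_combination_right h, ← planeDet_combination_right h']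
      exact hu.sign_planeDet_eq hu' a c
end
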